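/- Let m ≥ 4 and let π(x) = (1/2) g_m(x) + (1/2) u_m(x), where g_m(x) = (2π)^{−1/2} e^{−(x−m)²/2} and u_m(x) = e^{−d(x,[−m,2m])²/2} / (3m + √(2π)). Then π satisfies a log-Sobolev inequality with constant 324 m³: for every smooth compactly supported f : ℝ → ℝ, ∫ f² log( f² / ∫ f² π dx ) π dx ≤ 2 · 324 m³ · ∫ (f′)² π dx. -/

import Mathlib

open MeasureTheory Real

/-- The density of N(m, 1). -/
noncomputable def gaussAt (m x : ℝ) : ℝ := Real.exp (-(x - m) ^ 2 / 2) / Real.sqrt (2 * Real.pi)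

/-- The smoothed uniform density on [−m, 2m]. -/
noncomputable def smUnif (m x : ℝ) : ℝ :=
  Real.exp (-(Metric.infDist x (Set.Icc (-m) (2 * m))) ^ 2 / 2) / (3 * m + Real.sqrt (2 * Real.pi))

/-!
The mixture is, up to multiplicative constants, `exp (-d ^ 2 / 2)` with `d` the distance to
`[-m, 2 * m]`: the Gaussian is centred inside this interval, so it is dominated by the smoothed
uniform density up to a factor of order `m`. The potential `d ^ 2 / 2` is flat on the interval, but
it lies within `1` of a potential that is strongly convex with modulus of order `m ^ (-2)`. The
Bakry–Émery theorem for the latter and the Holley–Stroock perturbation argument then give a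
log-Sobolev constant of order `m * m ^ 2`.

The Bakry–Émery theorem is proved by monotone transport: if `T` transports `h * exp (-V)` to
`exp (-V)`, then `log T'` is expressed through `h`, `V` and `V ∘ T`; the bound `log T' ≤ T' - 1`,
the strong convexity of `V` and Young's inequality bound the entropy of `h` by its Fisher
information plus the derivative of the flux `h * (T - id) * exp (-V)`, which integrates to zero.
-/

section Entropy

open Filter Topology InformationTheory

variable {α ι : Type*} [MeasurableSpace α] {μ : Measure α} {q r h : α → ℝ}

/-- The (unnormalised) entropy functional of `h` for the measure with density `q` with respect to
`μ`. It is homogeneous in `h` and in `q`, and `q` need not have mass one. -/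
noncomputable def weightedEntropy (μ : Measure α) (q h : α → ℝ) : ℝ :=
  (∫ x, h x * log (h x) * q x ∂μ)
    - (∫ x, h x * q x ∂μ) * log ((∫ x, h x * q x ∂μ) / ∫ x, q x ∂μ)

/-- The integrability that `weightedEntropy μ q h` needs in order not to take junk values. -/
structure HasWeightedEntropy (μ : Measure α) (q h : α → ℝ) : Prop where
  integrable_weight : Integrable q μ
  integrable_mul : Integrable (fun x ↦ h x * q x) μ
  integrable_mul_log : Integrable (fun x ↦ h x * log (h x) * q x) μ

lemma mul_klFun_div (s : ℝ) {t : ℝ} (ht : t ≠ 0) :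
    t * klFun (s / t) = s * log s - (log t + 1) * s + t := by
  rcases eq_or_ne s 0 with rfl | hs
  · simp [klFun_apply]
  · rw [klFun_apply, log_div hs ht]
    field_simp
    ring

lemma HasWeightedEntropy.weightedEntropy_const_mul (H : HasWeightedEntropy μ q h)
    (hq : ∫ x, q x ∂μ ≠ 0) (k : ℝ) :
    weightedEntropy μ q (fun x ↦ k * h x) = k * weightedEntropy μ q h := by
  rcases eq_or_ne k 0 with rfl | hk
  · simp [weightedEntropy]
  have log_scale (x : α) : k * h x * log (k * h x) * q x
      = k * (h x * log (h x) * q x) + k * log k * (h x * q x) := by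
    rcases eq_or_ne (h x) 0 with hx | hx
    · simp [hx]
    · rw [log_mul hk hx]
      ring
  simp only [weightedEntropy, log_scale]
  rw [integral_add (H.integrable_mul_log.const_mul _) (H.integrable_mul.const_mul _)]
  simp only [mul_assoc, integral_const_mul]
  rcases eq_or_ne (∫ x, h x * q x ∂μ) 0 with hA | hA
  · simp [hA]
  · rw [mul_div_assoc, log_mul hk (div_ne_zero hA hq)]
    ring

/-- The Bregman deviation from the constant `t` exceeds the entropy by a nonnegative term, which
vanishes when `t` is the mean of `h`. -/
lemma HasWeightedEntropy.integral_mul_klFun_div (H : HasWeightedEntropy μ q h)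
    (hq : ∫ x, q x ∂μ ≠ 0) {t : ℝ} (ht : t ≠ 0) :
    ∫ x, t * klFun (h x / t) * q x ∂μ = weightedEntropy μ q h
      + t * (∫ x, q x ∂μ) * klFun ((∫ x, h x * q x ∂μ) / (t * ∫ x, q x ∂μ)) := by
  have expand : ∫ x, t * klFun (h x / t) * q x ∂μ = (∫ x, h x * log (h x) * q x ∂μ)
      - (log t + 1) * (∫ x, h x * q x ∂μ) + t * ∫ x, q x ∂μ := by
    rw [← integral_const_mul, ← integral_const_mul,
      ← integral_sub H.integrable_mul_log (H.integrable_mul.const_mul _),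
      ← integral_add (by exact H.integrable_mul_log.sub (H.integrable_mul.const_mul _))
        (H.integrable_weight.const_mul _)]
    exact integral_congr_ae (.of_forall fun x ↦ by simp only [mul_klFun_div _ ht]; ring)
  rw [expand, mul_klFun_div _ (mul_ne_zero ht hq), weightedEntropy]
  rcases eq_or_ne (∫ x, h x * q x ∂μ) 0 with hA | hA
  · simp [hA]
  · rw [log_div hA hq, log_mul ht hq]
    ring

lemma HasWeightedEntropy.integrable_mul_klFun_div (H : HasWeightedEntropy μ q h) {t : ℝ}
    (ht : t ≠ 0) : Integrable (fun x ↦ t * klFun (h x / t) * q x) μ := by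
  refine ((H.integrable_mul_log.sub (H.integrable_mul.const_mul (log t + 1))).add
    (H.integrable_weight.const_mul t)).congr (.of_forall fun x ↦ ?_)
  simp only [Pi.add_apply, Pi.sub_apply, mul_klFun_div _ ht]
  ring

/-- Holley–Stroock perturbation: the Bregman deviation is nonnegative, so its integral is monotone
in the weight, and the entropy is its infimum over `t`. -/
lemma HasWeightedEntropy.weightedEntropy_le_mul (Hq : HasWeightedEntropy μ q h)
    (Hr : HasWeightedEntropy μ r h) (hh : ∀ x, 0 ≤ h x) (hq : ∀ x, 0 ≤ q x)
    (hq_int : 0 < ∫ x, q x ∂μ) {K : ℝ} (hK : 0 < K) (hqr : ∀ x, q x ≤ K * r x) :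
    weightedEntropy μ q h ≤ K * weightedEntropy μ r h := by
  have hr (x : α) : 0 ≤ r x := nonneg_of_mul_nonneg_right ((hq x).trans (hqr x)) hK
  have hr_int : 0 < ∫ x, r x ∂μ := by
    refine pos_of_mul_pos_right (hq_int.trans_le ?_) hK.le
    rw [← integral_const_mul]
    exact integral_mono Hq.integrable_weight (Hr.integrable_weight.const_mul K) hqr
  have compare {t : ℝ} (ht : 0 < t) : weightedEntropy μ q h ≤ K * (weightedEntropy μ r h
      + t * (∫ x, r x ∂μ) * klFun ((∫ x, h x * r x ∂μ) / (t * ∫ x, r x ∂μ))) := by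
    have hhq : 0 ≤ ∫ x, h x * q x ∂μ := integral_nonneg fun x ↦ mul_nonneg (hh x) (hq x)
    calc weightedEntropy μ q h ≤ ∫ x, t * klFun (h x / t) * q x ∂μ := by
          rw [Hq.integral_mul_klFun_div hq_int.ne' ht.ne']
          exact le_add_of_nonneg_right (mul_nonneg (by positivity) (klFun_nonneg (by positivity)))
      _ ≤ ∫ x, K * (t * klFun (h x / t) * r x) ∂μ := by
          refine integral_mono (Hq.integrable_mul_klFun_div ht.ne')
            ((Hr.integrable_mul_klFun_div ht.ne').const_mul K) fun x ↦ ?_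
          have hkl : 0 ≤ t * klFun (h x / t) :=
            mul_nonneg ht.le (klFun_nonneg (div_nonneg (hh x) ht.le))
          calc t * klFun (h x / t) * q x ≤ t * klFun (h x / t) * (K * r x) :=
                mul_le_mul_of_nonneg_left (hqr x) hkl
            _ = K * (t * klFun (h x / t) * r x) := by ring
      _ = _ := by rw [integral_const_mul, Hr.integral_mul_klFun_div hr_int.ne' ht.ne']
  have hhr : 0 ≤ ∫ x, h x * r x ∂μ := integral_nonneg fun x ↦ mul_nonneg (hh x) (hr x)
  rcases hhr.eq_or_lt with hhr_zero | hhr_pos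
  · refine le_of_forall_pos_le_add fun ε hε ↦ ?_
    have := compare (t := ε / (K * ∫ x, r x ∂μ)) (by positivity)
    rw [← hhr_zero, zero_div, klFun_zero] at this
    refine this.trans_eq ?_
    field_simp
  · have := compare (div_pos hhr_pos hr_int)
    rwa [div_mul_cancel₀ _ hr_int.ne', div_self hhr_pos.ne', klFun_one, mul_zero, add_zero] at this

lemma tendsto_mul_log_div {l : Filter ι} {A Z : ι → ℝ} {A₀ Z₀ : ℝ} (hA : Tendsto A l (𝓝 A₀))
    (hZ : Tendsto Z l (𝓝 Z₀)) (hZ₀ : Z₀ ≠ 0) :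
    Tendsto (fun i ↦ A i * log (A i / Z i)) l (𝓝 (A₀ * log (A₀ / Z₀))) := by
  have h := hZ.mul ((continuous_mul_log.tendsto _).comp (hA.div hZ hZ₀))
  rw [show Z₀ * (A₀ / Z₀ * log (A₀ / Z₀)) = A₀ * log (A₀ / Z₀) by field_simp] at h
  refine h.congr' ?_
  filter_upwards [hZ.eventually_ne hZ₀] with i hi
  simp only [Function.comp_apply, Pi.div_apply]
  field_simp

lemma HasWeightedEntropy.tendsto_weightedEntropy_restrict (H : HasWeightedEntropy μ q h)
    (hq : ∫ x, q x ∂μ ≠ 0) {l : Filter ι} [l.IsCountablyGenerated] {φ : ι → Set α}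
    (hφ : AECover μ l φ) :
    Tendsto (fun i ↦ weightedEntropy (μ.restrict (φ i)) q h) l (𝓝 (weightedEntropy μ q h)) :=
  (hφ.integral_tendsto_of_countably_generated H.integrable_mul_log).sub
    (tendsto_mul_log_div (hφ.integral_tendsto_of_countably_generated H.integrable_mul)
      (hφ.integral_tendsto_of_countably_generated H.integrable_weight) hq)

end Entropy

section CompactSupport

variable {X : Type*} [TopologicalSpace X] [MeasurableSpace X] [OpensMeasurableSpace X]
  {μ : Measure X}

lemma integrable_mul_of_hasCompactSupport {q g : X → ℝ} (hq : Integrable q μ) (hg : Continuous g)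
    (hgs : HasCompactSupport g) : Integrable (fun x ↦ g x * q x) μ := by
  obtain ⟨C, hC⟩ := hgs.exists_bound_of_continuous hg
  exact hq.bdd_mul hg.aestronglyMeasurable (.of_forall hC)

lemma hasWeightedEntropy_sq {q f : X → ℝ} (hq : Integrable q μ) (hf : Continuous f)
    (hfs : HasCompactSupport f) : HasWeightedEntropy μ q (fun x ↦ f x ^ 2) where
  integrable_weight := hq
  integrable_mul := integrable_mul_of_hasCompactSupport hq (hf.pow 2)
    (hfs.comp_left (g := fun y ↦ y ^ 2) (by simp))
  integrable_mul_log := integrable_mul_of_hasCompactSupport hq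
    (continuous_mul_log.comp (hf.pow 2))
    (hfs.comp_left (g := fun y ↦ y ^ 2 * log (y ^ 2)) (by simp))

end CompactSupport

section Transport

open Set

lemma exists_transport {ρ σ : ℝ → ℝ} (hρ : Continuous ρ) (hσ : Continuous σ)
    (hρ_pos : ∀ x, 0 < ρ x) (hσ_nonneg : ∀ x, 0 ≤ σ x) {a b : ℝ} (hab : a ≤ b)
    (hmass : ∫ x in a..b, σ x = ∫ x in a..b, ρ x) :
    ∃ T : ℝ → ℝ, T a = a ∧ T b = b ∧
      ∀ x ∈ Icc a b, HasDerivAt T (σ x / ρ (T x)) x := by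
  set R : ℝ → ℝ := fun x ↦ ∫ t in a..x, ρ t
  set S : ℝ → ℝ := fun x ↦ ∫ t in a..x, σ t
  have hR (x : ℝ) : HasStrictDerivAt R (ρ x) x := hρ.integral_hasStrictDerivAt a x
  have hS (x : ℝ) : HasDerivAt S (σ x) x := (hσ.integral_hasStrictDerivAt a x).hasDerivAt
  have hR_cont : Continuous R :=
    continuous_iff_continuousAt.2 fun x ↦ (hR x).hasDerivAt.continuousAt
  have hR_inj : R.Injective :=
    (strictMono_of_hasDerivAt_pos (fun x ↦ (hR x).hasDerivAt) hρ_pos).injective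
  have hS_mono : Monotone S := monotone_of_hasDerivAt_nonneg hS hσ_nonneg
  have hSa : S a = R a := by simp only [S, R, intervalIntegral.integral_same]
  set T : ℝ → ℝ := fun x ↦ Function.invFun R (S x)
  have hRT (x : ℝ) (hx : x ∈ Icc a b) : R (T x) = S x := by
    have hSx : S x ∈ Icc (R a) (R b) :=
      ⟨hSa.symm.trans_le (hS_mono hx.1), (hS_mono hx.2).trans_eq hmass⟩
    obtain ⟨t, -, ht⟩ := intermediate_value_Icc hab hR_cont.continuousOn hSx
    exact Function.invFun_eq ⟨t, ht⟩
  refine ⟨T, hR_inj ((hRT a (left_mem_Icc.2 hab)).trans hSa),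
    hR_inj ((hRT b (right_mem_Icc.2 hab)).trans hmass), fun x hx ↦ ?_⟩
  have hinv : HasDerivAt (Function.invFun R) (ρ (T x))⁻¹ (S x) :=
    hRT x hx ▸ ((hR (T x)).to_local_left_inverse (hρ_pos _).ne'
      (.of_forall (Function.leftInverse_invFun hR_inj))).hasDerivAt
  exact (hinv.comp x (hS x)).congr_deriv (inv_mul_eq_div _ _)

end Transport

section StrongConvexity

open Set

lemma add_deriv_mul_sub_le_of_convexOn {φ : ℝ → ℝ} (hφ : ConvexOn ℝ univ φ) {φ' x : ℝ}
    (hd : HasDerivAt φ φ' x) (y : ℝ) : φ x + φ' * (y - x) ≤ φ y := by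
  rcases lt_trichotomy x y with hxy | rfl | hyx
  · have := hφ.le_slope_of_hasDerivAt (mem_univ _) (mem_univ _) hxy hd
    rw [slope_def_field, le_div_iff₀ (sub_pos.2 hxy)] at this
    linarith
  · simp
  · have := hφ.slope_le_of_hasDerivAt (mem_univ _) (mem_univ _) hyx hd
    rw [slope_def_field, div_le_iff₀ (sub_pos.2 hyx)] at this
    linarith

lemma add_deriv_mul_sub_add_sq_le_of_strongConvexOn {c : ℝ} {V : ℝ → ℝ}
    (hV : StrongConvexOn univ c V) {V' x : ℝ} (hd : HasDerivAt V V' x) (y : ℝ) :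
    V x + V' * (y - x) + c / 2 * (y - x) ^ 2 ≤ V y := by
  have hsq : HasDerivAt (fun z : ℝ ↦ c / 2 * ‖z‖ ^ 2) (c / 2 * (2 * x)) x := by
    simpa using (hasDerivAt_pow 2 x).const_mul (c / 2)
  have := add_deriv_mul_sub_le_of_convexOn (strongConvexOn_iff_convex.1 hV) (hd.sub hsq) y
  simp only [Real.norm_eq_abs, sq_abs] at this
  linarith

end StrongConvexity

section BakryEmery

open Set Filter Topology

variable {c : ℝ} {V : ℝ → ℝ}

/-- The derivative of the flux `h * (T - id) * exp (-V)` of the displacement of a map `T` with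
derivative `T'`. -/
noncomputable def displacementFluxDeriv (V h T T' : ℝ → ℝ) (x : ℝ) : ℝ :=
  (deriv h x * (T x - x) + h x * (T' x - 1) - h x * (T x - x) * deriv V x) * exp (-V x)

lemma hasDerivAt_displacementFlux {V h T T' : ℝ → ℝ} {x : ℝ} (hV : DifferentiableAt ℝ V x)
    (hh : DifferentiableAt ℝ h x) (hT : HasDerivAt T (T' x) x) :
    HasDerivAt (fun x ↦ h x * (T x - x) * exp (-V x)) (displacementFluxDeriv V h T T' x) x := by
  refine ((hh.hasDerivAt.mul (hT.sub (hasDerivAt_id x))).mul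
    hV.hasDerivAt.neg.exp).congr_deriv ?_
  simp only [displacementFluxDeriv, Pi.mul_apply, Pi.sub_apply, Pi.neg_apply, id_eq]
  ring

lemma intervalIntegrable_displacementFluxDeriv {V h T T' : ℝ → ℝ} (hV : ContDiff ℝ 1 V)
    (hh : ContDiff ℝ 1 h) {a b : ℝ} (hT : ContinuousOn T (uIcc a b))
    (hT' : ContinuousOn T' (uIcc a b)) :
    IntervalIntegrable (displacementFluxDeriv V h T T') volume a b := by
  have := hV.continuous
  have := hh.continuous
  have : Continuous (deriv V) := hV.continuous_deriv le_rfl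
  have : Continuous (deriv h) := hh.continuous_deriv le_rfl
  refine ContinuousOn.intervalIntegrable ?_
  unfold displacementFluxDeriv
  fun_prop

lemma mul_log_le_of_strongConvexOn (hc : 0 < c) (hV : StrongConvexOn univ c V) {x : ℝ}
    (hd : DifferentiableAt ℝ V x) {h T T' : ℝ → ℝ} (hh : 0 < h x)
    (hT' : T' x = h x * exp (-V x) / exp (-V (T x))) :
    h x * log (h x) * exp (-V x) ≤ displacementFluxDeriv V h T T' x
      + 1 / (2 * c) * (deriv h x ^ 2 / h x * exp (-V x)) := by
  set y : ℝ := T x - x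
  have hT'_pos : 0 < T' x := by
    rw [hT']
    positivity
  have hlog : log (T' x) = log (h x) - V x + V (T x) := by
    rw [hT', log_div (by positivity) (exp_ne_zero _), log_mul hh.ne' (exp_ne_zero _), log_exp,
      log_exp]
    ring
  have hlog_le : log (h x) ≤ T' x - 1 - deriv V x * y - c / 2 * y ^ 2 := by
    linarith [log_le_sub_one_of_pos hT'_pos,
      add_deriv_mul_sub_add_sq_le_of_strongConvexOn hV hd.hasDerivAt (T x)]
  have young : 0 ≤ h x * (c / 2 * y ^ 2) + deriv h x * y + 1 / (2 * c) * (deriv h x ^ 2 / h x) := by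
    have : h x * (c / 2 * y ^ 2) + deriv h x * y + 1 / (2 * c) * (deriv h x ^ 2 / h x)
        = (c * h x * y + deriv h x) ^ 2 / (2 * c * h x) := by
      field_simp
      ring
    rw [this]
    positivity
  have : h x * log (h x) ≤ deriv h x * y + h x * (T' x - 1) - h x * y * deriv V x
      + 1 / (2 * c) * (deriv h x ^ 2 / h x) := by
    linarith [mul_le_mul_of_nonneg_left hlog_le hh.le]
  exact (mul_le_mul_of_nonneg_right this (exp_pos (-V x)).le).trans_eq
    (by rw [displacementFluxDeriv]; ring)

lemma integral_mul_log_le_of_integral_eq (hc : 0 < c) (hVd : ContDiff ℝ 1 V)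
    (hV : StrongConvexOn univ c V) {h : ℝ → ℝ} (hh : ContDiff ℝ 1 h) (hpos : ∀ x, 0 < h x)
    {a b : ℝ} (hab : a ≤ b)
    (hmass : ∫ x in a..b, h x * exp (-V x) = ∫ x in a..b, exp (-V x)) :
    ∫ x in a..b, h x * log (h x) * exp (-V x)
      ≤ 1 / (2 * c) * ∫ x in a..b, deriv h x ^ 2 / h x * exp (-V x) := by
  have hV_cont := hVd.continuous
  have hh_cont := hh.continuous
  have : Continuous (deriv h) := hh.continuous_deriv le_rfl
  have hV_diff := hVd.differentiable one_ne_zero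
  obtain ⟨T, hTa, hTb, hT⟩ := exists_transport (by fun_prop : Continuous fun x ↦ exp (-V x))
    (by fun_prop : Continuous fun x ↦ h x * exp (-V x)) (fun x ↦ exp_pos _)
    (fun x ↦ mul_nonneg (hpos x).le (exp_pos _).le) hab hmass
  set T' : ℝ → ℝ := fun x ↦ h x * exp (-V x) / exp (-V (T x))
  rw [← uIcc_of_le hab] at hT
  have hT_cont : ContinuousOn T (uIcc a b) := fun x hx ↦
    (hT x hx).continuousAt.continuousWithinAt
  have hT'_cont : ContinuousOn T' (uIcc a b) := by
    have := hV_cont.comp_continuousOn hT_cont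
    fun_prop (disch := simp)
  have hflux_int := intervalIntegrable_displacementFluxDeriv hVd hh hT_cont hT'_cont
  have hflux_zero : ∫ x in a..b, displacementFluxDeriv V h T T' x = 0 := by
    simp [intervalIntegral.integral_eq_sub_of_hasDerivAt (fun x hx ↦ hasDerivAt_displacementFlux
      (hV_diff x) (hh.differentiable one_ne_zero x) (hT x hx)) hflux_int, hTa, hTb]
  have hlog_int : IntervalIntegrable (fun x ↦ h x * log (h x) * exp (-V x)) volume a b :=
    ((continuous_mul_log.comp hh_cont).mul (by fun_prop)).intervalIntegrable _ _
  have hfisher_int : IntervalIntegrable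
      (fun x ↦ 1 / (2 * c) * (deriv h x ^ 2 / h x * exp (-V x))) volume a b :=
    Continuous.intervalIntegrable (by fun_prop (disch := exact fun x ↦ (hpos x).ne')) _ _
  calc ∫ x in a..b, h x * log (h x) * exp (-V x)
      ≤ ∫ x in a..b, (displacementFluxDeriv V h T T' x
          + 1 / (2 * c) * (deriv h x ^ 2 / h x * exp (-V x))) :=
        intervalIntegral.integral_mono_on hab hlog_int (hflux_int.add hfisher_int)
          fun x _ ↦ mul_log_le_of_strongConvexOn hc hV (hV_diff x) (hpos x) rfl
    _ = 1 / (2 * c) * ∫ x in a..b, deriv h x ^ 2 / h x * exp (-V x) := by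
        rw [intervalIntegral.integral_add hflux_int hfisher_int, hflux_zero, zero_add,
          intervalIntegral.integral_const_mul]

lemma hasWeightedEntropy_restrict_Ioc {q h : ℝ → ℝ} (hq : Continuous q) (hh : Continuous h)
    (a b : ℝ) : HasWeightedEntropy (volume.restrict (Ioc a b)) q h where
  integrable_weight := hq.integrableOn_Ioc
  integrable_mul := (hh.mul hq).integrableOn_Ioc
  integrable_mul_log := ((continuous_mul_log.comp hh).mul hq).integrableOn_Ioc

lemma continuous_weightedEntropy_add_const {q h : ℝ → ℝ} (hq : Continuous q) (hh : Continuous h)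
    {a b : ℝ} (hab : a ≤ b) (hZ : ∫ x in Ioc a b, q x ≠ 0) :
    Continuous fun ε ↦ weightedEntropy (volume.restrict (Ioc a b)) q (fun x ↦ h x + ε) := by
  simp only [weightedEntropy, ← intervalIntegral.integral_of_le hab] at hZ ⊢
  have hentropy : Continuous fun ε ↦ ∫ x in a..b, (h x + ε) * log (h x + ε) * q x := by
    refine intervalIntegral.continuous_parametric_intervalIntegral_of_continuous' ?_ a b
    exact (continuous_mul_log.comp (by fun_prop : Continuous fun p : ℝ × ℝ ↦ h p.2 + p.1)).mul
      (by fun_prop)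
  have hmass : Continuous fun ε ↦ ∫ x in a..b, (h x + ε) * q x := by
    refine intervalIntegral.continuous_parametric_intervalIntegral_of_continuous' ?_ a b
    simp only [Function.uncurry_def]
    fun_prop
  exact hentropy.sub (continuous_iff_continuousAt.2 fun ε ↦
    tendsto_mul_log_div (hmass.tendsto ε) tendsto_const_nhds hZ)

lemma weightedEntropy_Ioc_le_of_pos (hc : 0 < c) (hVd : ContDiff ℝ 1 V)
    (hV : StrongConvexOn univ c V) {h : ℝ → ℝ} (hh : ContDiff ℝ 1 h) (hpos : ∀ x, 0 < h x)
    {a b : ℝ} (hab : a < b) :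
    weightedEntropy (volume.restrict (Ioc a b)) (fun x ↦ exp (-V x)) h
      ≤ 1 / (2 * c) * ∫ x in Ioc a b, deriv h x ^ 2 / h x * exp (-V x) := by
  have hq : Continuous fun x ↦ exp (-V x) := by have := hVd.continuous; fun_prop
  have hhq : Continuous fun x ↦ h x * exp (-V x) := hh.continuous.mul hq
  simp only [← intervalIntegral.integral_of_le hab.le]
  have hA : 0 < ∫ x in a..b, h x * exp (-V x) := intervalIntegral.intervalIntegral_pos_of_pos
    (hhq.intervalIntegrable _ _) (fun x ↦ mul_pos (hpos x) (exp_pos _)) hab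
  have hZ : 0 < ∫ x in a..b, exp (-V x) := intervalIntegral.intervalIntegral_pos_of_pos
    (hq.intervalIntegrable _ _) (fun x ↦ exp_pos _) hab
  set k : ℝ := (∫ x in a..b, exp (-V x)) / ∫ x in a..b, h x * exp (-V x)
  have hk : 0 < k := div_pos hZ hA
  have hmass : ∫ x in a..b, k * h x * exp (-V x) = ∫ x in a..b, exp (-V x) := by
    simp only [mul_assoc, intervalIntegral.integral_const_mul]
    exact div_mul_cancel₀ _ hA.ne'
  have normalized := integral_mul_log_le_of_integral_eq hc hVd hV (contDiff_const.mul hh)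
    (fun x ↦ mul_pos hk (hpos x)) hab.le hmass
  have fisher_eq : ∫ x in a..b, deriv (fun x ↦ k * h x) x ^ 2 / (k * h x) * exp (-V x)
      = k * ∫ x in a..b, deriv h x ^ 2 / h x * exp (-V x) := by
    rw [← intervalIntegral.integral_const_mul]
    refine intervalIntegral.integral_congr fun x _ ↦ ?_
    simp only [deriv_const_mul _ (hh.differentiable one_ne_zero x)]
    field_simp
  have hasEntropy := hasWeightedEntropy_restrict_Ioc hq hh.continuous a b
  have entropy_eq := hasEntropy.weightedEntropy_const_mul
    (by rw [← intervalIntegral.integral_of_le hab.le]; exact hZ.ne') k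
  rw [weightedEntropy, ← intervalIntegral.integral_of_le hab.le,
    ← intervalIntegral.integral_of_le hab.le, ← intervalIntegral.integral_of_le hab.le, hmass,
    div_self hZ.ne', log_one, mul_zero, sub_zero] at entropy_eq
  rwa [entropy_eq, fisher_eq, mul_left_comm, mul_le_mul_iff_right₀ hk] at normalized

lemma weightedEntropy_Ioc_sq_add_le (hc : 0 < c) (hVd : ContDiff ℝ 1 V)
    (hV : StrongConvexOn univ c V) {f : ℝ → ℝ} (hf : ContDiff ℝ 1 f) {a b : ℝ} (hab : a < b)
    {ε : ℝ} (hε : 0 < ε) :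
    weightedEntropy (volume.restrict (Ioc a b)) (fun x ↦ exp (-V x)) (fun x ↦ f x ^ 2 + ε)
      ≤ 2 / c * ∫ x in Ioc a b, deriv f x ^ 2 * exp (-V x) := by
  have := hVd.continuous
  have := hf.continuous
  have : Continuous (deriv f) := hf.continuous_deriv le_rfl
  have hpos (x : ℝ) : 0 < f x ^ 2 + ε := by positivity
  have hderiv (x : ℝ) : deriv (fun x ↦ f x ^ 2 + ε) x = 2 * f x * deriv f x := by
    simpa using (((hf.differentiable one_ne_zero x).hasDerivAt.pow 2).add_const ε).deriv
  have fisher_le (x : ℝ) : (2 * f x * deriv f x) ^ 2 / (f x ^ 2 + ε) ≤ 4 * deriv f x ^ 2 := by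
    rw [div_le_iff₀ (hpos x)]
    nlinarith [mul_nonneg hε.le (sq_nonneg (deriv f x))]
  calc weightedEntropy (volume.restrict (Ioc a b)) (fun x ↦ exp (-V x)) (fun x ↦ f x ^ 2 + ε)
      ≤ 1 / (2 * c) * ∫ x in Ioc a b, (2 * f x * deriv f x) ^ 2 / (f x ^ 2 + ε) * exp (-V x) := by
        simpa only [hderiv] using weightedEntropy_Ioc_le_of_pos hc hVd hV
          ((hf.pow 2).add contDiff_const) hpos hab
    _ ≤ 1 / (2 * c) * ∫ x in Ioc a b, 4 * deriv f x ^ 2 * exp (-V x) := by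
        refine mul_le_mul_of_nonneg_left (integral_mono ?_ ?_ fun x ↦
          mul_le_mul_of_nonneg_right (fisher_le x) (exp_pos _).le) (by positivity)
        · exact Continuous.integrableOn_Ioc (by fun_prop (disch := simp [(hpos _).ne']))
        · exact Continuous.integrableOn_Ioc (by fun_prop)
    _ = 2 / c * ∫ x in Ioc a b, deriv f x ^ 2 * exp (-V x) := by
        simp only [mul_assoc, integral_const_mul]
        field_simp
        norm_num

lemma weightedEntropy_Ioc_sq_le (hc : 0 < c) (hVd : ContDiff ℝ 1 V)
    (hV : StrongConvexOn univ c V) {f : ℝ → ℝ} (hf : ContDiff ℝ 1 f) {a b : ℝ} (hab : a < b) :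
    weightedEntropy (volume.restrict (Ioc a b)) (fun x ↦ exp (-V x)) (fun x ↦ f x ^ 2)
      ≤ 2 / c * ∫ x in Ioc a b, deriv f x ^ 2 * exp (-V x) := by
  have hq : Continuous fun x ↦ exp (-V x) := by have := hVd.continuous; fun_prop
  have hZ : ∫ x in Ioc a b, exp (-V x) ≠ 0 := by
    rw [← intervalIntegral.integral_of_le hab.le]
    exact (intervalIntegral.intervalIntegral_pos_of_pos (hq.intervalIntegrable _ _)
      (fun x ↦ exp_pos _) hab).ne'
  have hlim := (continuous_weightedEntropy_add_const hq (hf.continuous.pow 2) hab.le hZ).tendsto 0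
  simp only [add_zero] at hlim
  exact le_of_tendsto (hlim.mono_left (nhdsWithin_le_nhds (s := Ioi 0)))
    (eventually_mem_nhdsWithin.mono fun ε (hε : 0 < ε) ↦
      weightedEntropy_Ioc_sq_add_le hc hVd hV hf hab hε)

lemma weightedEntropy_sq_le_of_strongConvexOn (hc : 0 < c) (hVd : ContDiff ℝ 1 V)
    (hV : StrongConvexOn univ c V) (hV_int : Integrable fun x ↦ exp (-V x)) {f : ℝ → ℝ}
    (hf : ContDiff ℝ 1 f) (hfs : HasCompactSupport f) :
    weightedEntropy volume (fun x ↦ exp (-V x)) (fun x ↦ f x ^ 2)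
      ≤ 2 / c * ∫ x, deriv f x ^ 2 * exp (-V x) := by
  have exhaustion : AECover volume atTop fun n : ℕ ↦ Ioc (-(n : ℝ)) n :=
    aecover_Ioc (tendsto_neg_atTop_atBot.comp tendsto_natCast_atTop_atTop)
      tendsto_natCast_atTop_atTop
  have hdf_int : Integrable fun x ↦ deriv f x ^ 2 * exp (-V x) :=
    integrable_mul_of_hasCompactSupport hV_int ((hf.continuous_deriv le_rfl).pow 2)
      (hfs.deriv.comp_left (g := fun y ↦ y ^ 2) (by simp))
  refine le_of_tendsto_of_tendsto
    ((hasWeightedEntropy_sq hV_int hf.continuous hfs).tendsto_weightedEntropy_restrict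
      (integral_exp_pos hV_int).ne' exhaustion)
    ((exhaustion.integral_tendsto_of_countably_generated hdf_int).const_mul (2 / c)) ?_
  filter_upwards [eventually_gt_atTop 0] with n hn
  exact weightedEntropy_Ioc_sq_le hc hVd hV hf (by have : (0 : ℝ) < n := mod_cast hn; linarith)

end BakryEmery

section LogSobolev

/-- The probability density `q` satisfies the log-Sobolev inequality with constant `C`, tested on
smooth compactly supported functions. -/
def SatisfiesLogSobolev (q : ℝ → ℝ) (C : ℝ) : Prop :=
  ∀ f : ℝ → ℝ, ContDiff ℝ (⊤ : ℕ∞) f → HasCompactSupport f →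
    (∫ x, (f x) ^ 2 * log ((f x) ^ 2 / ∫ y, (f y) ^ 2 * q y) * q x)
      ≤ 2 * C * ∫ x, (deriv f x) ^ 2 * q x

lemma SatisfiesLogSobolev.mono {q : ℝ → ℝ} {C D : ℝ} (H : SatisfiesLogSobolev q C)
    (hq : ∀ x, 0 ≤ q x) (hCD : C ≤ D) : SatisfiesLogSobolev q D := fun f hf hfs ↦
  (H f hf hfs).trans (mul_le_mul_of_nonneg_right (mul_le_mul_of_nonneg_left hCD zero_le_two)
    (integral_nonneg fun x ↦ mul_nonneg (sq_nonneg _) (hq x)))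

variable {α : Type*} [MeasurableSpace α] {μ : Measure α} {q h : α → ℝ}

lemma HasWeightedEntropy.integral_mul_log_div_integral (H : HasWeightedEntropy μ q h)
    (hq : ∫ x, q x ∂μ = 1) (hhq : ∀ x, 0 ≤ h x * q x) :
    ∫ x, h x * log (h x / ∫ y, h y * q y ∂μ) * q x ∂μ = weightedEntropy μ q h := by
  rcases eq_or_ne (∫ x, h x * q x ∂μ) 0 with hA | hA
  · have null := (integral_eq_zero_iff_of_nonneg hhq H.integrable_mul).1 hA
    have : ∫ x, h x * log (h x) * q x ∂μ = 0 := integral_eq_zero_of_ae <| by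
      filter_upwards [null] with x (hx : h x * q x = 0)
      rw [mul_right_comm, hx, zero_mul, Pi.zero_apply]
    simp [weightedEntropy, hA, this]
  have log_quotient (x : α) : h x * log (h x / ∫ y, h y * q y ∂μ) * q x
      = h x * log (h x) * q x - log (∫ y, h y * q y ∂μ) * (h x * q x) := by
    rcases eq_or_ne (h x) 0 with hx | hx
    · simp [hx]
    · rw [log_div hx hA]
      ring
  simp only [log_quotient]
  rw [integral_sub H.integrable_mul_log (H.integrable_mul.const_mul _), integral_const_mul,
    weightedEntropy, hq, div_one, mul_comm (log _)]

lemma satisfiesLogSobolev_of_strongConvexOn {c : ℝ} (hc : 0 < c) {V : ℝ → ℝ}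
    (hVd : ContDiff ℝ 1 V) (hV : StrongConvexOn Set.univ c V)
    {q : ℝ → ℝ} (hq : Integrable q) (hq_one : ∫ x, q x = 1) {L U : ℝ} (hL : 0 < L)
    (hLq : ∀ x, L * exp (-V x) ≤ q x) (hqU : ∀ x, q x ≤ U * exp (-V x)) :
    SatisfiesLogSobolev q (U / (L * c)) := by
  intro f hf hfs
  have hf_one : ContDiff ℝ 1 f := hf.of_le (by norm_num)
  have hq_nonneg (x : ℝ) : 0 ≤ q x := (mul_pos hL (exp_pos _)).le.trans (hLq x)
  have hU : 0 < U := pos_of_mul_pos_left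
    ((mul_pos hL (exp_pos _)).trans_le ((hLq 0).trans (hqU 0))) (exp_pos _).le
  have hV_int : Integrable fun x ↦ exp (-V x) := by
    have := hVd.continuous
    refine (hq.const_mul L⁻¹).mono' (by fun_prop) (.of_forall fun x ↦ ?_)
    rw [norm_of_nonneg (exp_pos _).le, ← div_eq_inv_mul, le_div_iff₀' hL]
    exact hLq x
  have hdf {r : ℝ → ℝ} (hr : Integrable r) : Integrable fun x ↦ deriv f x ^ 2 * r x :=
    integrable_mul_of_hasCompactSupport hr ((hf_one.continuous_deriv le_rfl).pow 2)
      (hfs.deriv.comp_left (g := fun y ↦ y ^ 2) (by simp))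
  have Hq := hasWeightedEntropy_sq hq hf.continuous hfs
  calc ∫ x, f x ^ 2 * log (f x ^ 2 / ∫ y, f y ^ 2 * q y) * q x
      = weightedEntropy volume q (fun x ↦ f x ^ 2) :=
        Hq.integral_mul_log_div_integral hq_one fun x ↦ mul_nonneg (sq_nonneg _) (hq_nonneg x)
    _ ≤ U * weightedEntropy volume (fun x ↦ exp (-V x)) (fun x ↦ f x ^ 2) :=
        Hq.weightedEntropy_le_mul (hasWeightedEntropy_sq hV_int hf.continuous hfs)
          (fun x ↦ sq_nonneg _) hq_nonneg (hq_one ▸ one_pos) hU hqU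
    _ ≤ U * (2 / c * ∫ x, deriv f x ^ 2 * exp (-V x)) := mul_le_mul_of_nonneg_left
        (weightedEntropy_sq_le_of_strongConvexOn hc hVd hV hV_int hf_one hfs) hU.le
    _ = 2 * (U / (L * c)) * ∫ x, deriv f x ^ 2 * (L * exp (-V x)) := by
        simp only [mul_left_comm _ L, integral_const_mul]
        field_simp
    _ ≤ 2 * (U / (L * c)) * ∫ x, deriv f x ^ 2 * q x := mul_le_mul_of_nonneg_left
        (integral_mono (hdf (hV_int.const_mul L)) (hdf hq) fun x ↦
          mul_le_mul_of_nonneg_left (hLq x) (sq_nonneg _)) (by positivity)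

end LogSobolev

section Potential

open Set

lemma hasDerivAt_max_zero_sq (x : ℝ) :
    HasDerivAt (fun y : ℝ ↦ max y 0 ^ 2) (2 * max x 0) x := by
  have remainder_le (y : ℝ) :
      ‖max y 0 ^ 2 - (max x 0 ^ 2 + 2 * max x 0 * (y - x))‖ ≤ 1 * ‖‖y - x‖ ^ 2‖ := by
    rw [Real.norm_eq_abs, norm_pow, norm_norm, Real.norm_eq_abs, sq_abs, one_mul, abs_le]
    rcases le_total x 0 with hx | hx <;> rcases le_total y 0 with hy | hy <;>
      simp only [max_eq_left, max_eq_right, hx, hy] <;> constructor <;> nlinarith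
  have remainder_deriv : HasDerivAt
      (fun y ↦ max y 0 ^ 2 - (max x 0 ^ 2 + 2 * max x 0 * (y - x))) 0 x :=
    ((Asymptotics.IsBigO.of_bound 1 (.of_forall remainder_le)).hasFDerivAt
      one_lt_two).hasDerivAt
  have linear_deriv : HasDerivAt (fun y ↦ max x 0 ^ 2 + 2 * max x 0 * (y - x)) (2 * max x 0) x := by
    simpa using (((hasDerivAt_id x).sub_const x).const_mul (2 * max x 0)).const_add (max x 0 ^ 2)
  simpa [Pi.add_def] using remainder_deriv.add linear_deriv

lemma contDiff_max_zero_sq : ContDiff ℝ 1 fun y : ℝ ↦ max y 0 ^ 2 := by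
  have deriv_eq : deriv (fun y : ℝ ↦ max y 0 ^ 2) = fun x ↦ 2 * max x 0 :=
    funext fun x ↦ (hasDerivAt_max_zero_sq x).deriv
  refine contDiff_one_iff_deriv.2 ⟨fun x ↦ (hasDerivAt_max_zero_sq x).differentiableAt, ?_⟩
  rw [deriv_eq]
  fun_prop

/-- A strongly convex substitute for the potential `x ↦ (max (|x - c| - s) 0) ^ 2 / 2`, which is
flat on an interval: the two differ by a bounded amount when `s = (1 - 2 * a) * r`. -/
noncomputable def convexifiedPotential (a c r x : ℝ) : ℝ :=
  a * (x - c) ^ 2 + (1 / 2 - a) * max (|x - c| - r) 0 ^ 2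

variable {a r : ℝ}

lemma contDiff_convexifiedPotential (c : ℝ) (hr : 0 ≤ r) :
    ContDiff ℝ 1 (convexifiedPotential a c r) := by
  have split (y : ℝ) : max (|y| - r) 0 ^ 2 = max (y - r) 0 ^ 2 + max (-y - r) 0 ^ 2 := by
    rcases le_total 0 y with hy | hy
    · rw [abs_of_nonneg hy, max_eq_right (by linarith : -y - r ≤ 0)]
      ring
    · rw [abs_of_nonpos hy, max_eq_right (by linarith : y - r ≤ 0)]
      ring
  have hright : ContDiff ℝ 1 fun x ↦ max (x - c - r) 0 ^ 2 :=
    contDiff_max_zero_sq.comp (g := fun y : ℝ ↦ max y 0 ^ 2) (f := fun x ↦ x - c - r) (by fun_prop)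
  have hleft : ContDiff ℝ 1 fun x ↦ max (-(x - c) - r) 0 ^ 2 :=
    contDiff_max_zero_sq.comp (g := fun y : ℝ ↦ max y 0 ^ 2) (f := fun x ↦ -(x - c) - r)
      (by fun_prop)
  unfold convexifiedPotential
  simp only [split]
  fun_prop

lemma strongConvexOn_convexifiedPotential (c : ℝ) (ha : a ≤ 1 / 2) :
    StrongConvexOn univ (2 * a) (convexifiedPotential a c r) := by
  rw [strongConvexOn_iff_convex]
  have hdist : ConvexOn ℝ univ fun x ↦ |x - c| - r := by
    refine ((convexOn_dist c convex_univ).add_const (-r)).congr fun x _ ↦ ?_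
    rw [Pi.add_apply, Real.dist_eq, ← sub_eq_add_neg]
  have htail : ConvexOn ℝ univ fun x ↦ max (|x - c| - r) 0 ^ 2 :=
    (hdist.sup (convexOn_const 0 convex_univ)).pow (fun x _ ↦ le_max_right _ _) 2
  have haffine : ConvexOn ℝ univ fun x : ℝ ↦ -2 * a * c * x + a * c ^ 2 :=
    ((LinearMap.mulLeft ℝ (-2 * a * c)).convexOn convex_univ).add_const _
  refine (haffine.add (htail.smul (sub_nonneg.2 ha))).congr fun x _ ↦ ?_
  simp only [convexifiedPotential, Pi.add_apply, smul_eq_mul, Real.norm_eq_abs, sq_abs]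
  ring

lemma max_sub_sq_div_two_le {z : ℝ} (ha : 0 ≤ a) (ha' : a ≤ 1 / 2) (hr : 0 ≤ r) :
    max (z - (1 - 2 * a) * r) 0 ^ 2 / 2 ≤ a * z ^ 2 + (1 / 2 - a) * max (z - r) 0 ^ 2 := by
  set s : ℝ := (1 - 2 * a) * r with hs
  have hsr : s ≤ r := by nlinarith
  rcases le_total z s with hzs | hsz
  · rw [max_eq_right (by linarith), max_eq_right (by linarith)]
    nlinarith [mul_nonneg ha (sq_nonneg z)]
  rw [max_eq_left (by linarith)]
  rcases le_total z r with hzr | hrz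
  · have : z - s ≤ 2 * a * z := by nlinarith
    have : (z - s) ^ 2 ≤ (2 * a * z) ^ 2 := pow_le_pow_left₀ (by linarith) this 2
    rw [max_eq_right (by linarith)]
    nlinarith [mul_nonneg (mul_nonneg ha (sq_nonneg z)) (by linarith : 0 ≤ 1 - 2 * a)]
  · rw [max_eq_left (by linarith)]
    have : a * z ^ 2 + (1 / 2 - a) * (z - r) ^ 2 = (z - s) ^ 2 / 2 + s * a * r := by
      rw [hs]
      ring
    have : 0 ≤ s := by nlinarith
    nlinarith [mul_nonneg (mul_nonneg this ha) hr]

lemma le_max_sub_sq_div_two_add {z : ℝ} (ha : 0 ≤ a) (hr : 0 ≤ r) (hz : 0 ≤ z) :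
    a * z ^ 2 + (1 / 2 - a) * max (z - r) 0 ^ 2
      ≤ max (z - (1 - 2 * a) * r) 0 ^ 2 / 2 + a * r ^ 2 := by
  rcases le_total z r with hzr | hrz
  · rw [max_eq_right (by linarith : z - r ≤ 0)]
    have : a * z ^ 2 ≤ a * r ^ 2 := by gcongr
    nlinarith [sq_nonneg (max (z - (1 - 2 * a) * r) 0)]
  · rw [max_eq_left (by linarith), max_eq_left (by nlinarith)]
    nlinarith [mul_nonneg (mul_nonneg ha ha) (sq_nonneg r)]

end Potential

section Interval

open Set Metric

variable {a b : ℝ}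

lemma infDist_Icc (hab : a ≤ b) (x : ℝ) :
    infDist x (Icc a b) = max (|x - (a + b) / 2| - (b - a) / 2) 0 := by
  have : (Icc a b).Nonempty := nonempty_Icc.2 hab
  refine le_antisymm ?_ (max_le ?_ infDist_nonneg)
  · refine (infDist_le_dist_of_mem (projIcc a b hab x).2).trans ?_
    rw [Real.dist_eq]
    rcases le_total x a with hxa | hax
    · rw [projIcc_of_le_left hab hxa]
      refine le_max_of_le_left ?_
      rw [abs_of_nonpos (by linarith), abs_of_nonpos (by linarith)]
      linarith
    rcases le_total x b with hxb | hbx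
    · simp [projIcc_of_mem hab ⟨hax, hxb⟩]
    · rw [projIcc_of_right_le hab hbx]
      refine le_max_of_le_left ?_
      rw [abs_of_nonneg (by linarith), abs_of_nonneg (by linarith)]
      linarith
  · rw [le_infDist this]
    intro y hy
    have hy' : |y - (a + b) / 2| ≤ (b - a) / 2 :=
      abs_le.2 ⟨by linarith [hy.1], by linarith [hy.2]⟩
    rw [Real.dist_eq]
    linarith [abs_sub_le x y ((a + b) / 2)]

lemma exists_strongConvexOn_sub_infDist_Icc_sq_mem (hab : a ≤ b) :
    ∃ W : ℝ → ℝ, ContDiff ℝ 1 W ∧ StrongConvexOn univ (2 / (4 + ((b - a) / 2) ^ 2)) W ∧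
      ∀ x, W x - infDist x (Icc a b) ^ 2 / 2 ∈ Icc 0 1 := by
  set s : ℝ := (b - a) / 2 with hs
  have hs_nonneg : 0 ≤ s := by linarith
  -- The convexity modulus is `2 * k` and the defect of the potential is `k * r ^ 2`.
  set k : ℝ := 1 / (4 + s ^ 2) with hk
  have hk_nonneg : 0 ≤ k := by positivity
  have hk_compl : 1 - 2 * k = (2 + s ^ 2) / (4 + s ^ 2) := by
    rw [hk]
    field_simp
    ring
  have hk_compl_pos : 0 < 1 - 2 * k := by
    rw [hk_compl]
    positivity
  set r : ℝ := s / (1 - 2 * k) with hr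
  have hr_nonneg : 0 ≤ r := div_nonneg hs_nonneg hk_compl_pos.le
  have hkr : k * r ^ 2 ≤ 1 := by
    have : k * r ^ 2 = s ^ 2 * (4 + s ^ 2) / (2 + s ^ 2) ^ 2 := by
      rw [hr, hk_compl, hk]
      field_simp
    rw [this, div_le_one (by positivity)]
    nlinarith
  have hd (x : ℝ) : infDist x (Icc a b) = max (|x - (a + b) / 2| - (1 - 2 * k) * r) 0 := by
    rw [infDist_Icc hab, mul_div_cancel₀ s hk_compl_pos.ne']
  have hk_two : 2 / (4 + s ^ 2) = 2 * k := (mul_one_div _ _).symm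
  refine ⟨convexifiedPotential k ((a + b) / 2) r, contDiff_convexifiedPotential _ hr_nonneg,
    hk_two ▸ strongConvexOn_convexifiedPotential _ (by linarith), fun x ↦ ?_⟩
  rw [hd, convexifiedPotential, ← sq_abs (x - _)]
  exact ⟨sub_nonneg.2 (max_sub_sq_div_two_le hk_nonneg (by linarith) hr_nonneg),
    sub_le_iff_le_add'.2 ((le_max_sub_sq_div_two_add hk_nonneg hr_nonneg (abs_nonneg _)).trans
      (by gcongr))⟩

lemma satisfiesLogSobolev_of_infDist_Icc (hab : a ≤ b) {q : ℝ → ℝ} (hq : Integrable q)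
    (hq_one : ∫ x, q x = 1) {L U : ℝ} (hL : 0 < L)
    (hLq : ∀ x, L * exp (-infDist x (Icc a b) ^ 2 / 2) ≤ q x)
    (hqU : ∀ x, q x ≤ U * exp (-infDist x (Icc a b) ^ 2 / 2)) :
    SatisfiesLogSobolev q (exp 1 * (U / L) * (4 + ((b - a) / 2) ^ 2) / 2) := by
  obtain ⟨W, hW_diff, hW_conv, hW⟩ := exists_strongConvexOn_sub_infDist_Icc_sq_mem hab
  have hU : 0 ≤ U := nonneg_of_mul_nonneg_left ((mul_pos hL (exp_pos _)).le.trans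
    ((hLq a).trans (hqU a))) (exp_pos _)
  have hLW (x : ℝ) : L * exp (-W x) ≤ q x := (hLq x).trans' <|
    mul_le_mul_of_nonneg_left (exp_le_exp.2 (by linarith [(hW x).1])) hL.le
  have hqW (x : ℝ) : q x ≤ U * exp 1 * exp (-W x) := (hqU x).trans <| by
    rw [mul_assoc, ← exp_add]
    exact mul_le_mul_of_nonneg_left (exp_le_exp.2 (by linarith [(hW x).2])) hU
  convert satisfiesLogSobolev_of_strongConvexOn (by positivity) hW_diff hW_conv hq hq_one hL hLW
    hqW using 1
  field_simp

/-- The density proportional to `exp (-d ^ 2 / 2)`, where `d` is the distance to `[a, b]`. -/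
noncomputable def smoothedUniform (a b x : ℝ) : ℝ :=
  exp (-infDist x (Icc a b) ^ 2 / 2) / (b - a + √(2 * π))

lemma smoothedUniform_nonneg (hab : a ≤ b) (x : ℝ) : 0 ≤ smoothedUniform a b x :=
  div_nonneg (exp_pos _).le (add_nonneg (sub_nonneg.2 hab) (sqrt_nonneg _))

lemma integral_Ioi_exp_neg_max_sub_sq {s : ℝ} (hs : 0 ≤ s) :
    ∫ x in Ioi 0, exp (-max (x - s) 0 ^ 2 / 2) = s + √(2 * π) / 2 := by
  have hflat : ∫ x in (0)..s, exp (-max (x - s) 0 ^ 2 / 2) = s := by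
    rw [intervalIntegral.integral_congr (g := fun _ ↦ 1) fun x hx ↦ ?_]
    · simp
    · rw [uIcc_of_le hs] at hx
      simp [hx.2]
  have htail : ∫ x in Ioi s, exp (-max (x - s) 0 ^ 2 / 2) = √(2 * π) / 2 := by
    have shift := (measurePreserving_sub_right volume s).setIntegral_preimage_emb
      (measurableEmbedding_subRight s) (fun x ↦ exp (-max x 0 ^ 2 / 2)) (Ioi 0)
    rw [preimage_sub_const_Ioi, zero_add] at shift
    rw [shift, setIntegral_congr_fun (g := fun x ↦ exp (-(1 / 2) * x ^ 2)) measurableSet_Ioi,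
      integral_gaussian_Ioi, div_div_eq_mul_div, div_one, mul_comm π]
    intro x (hx : 0 < x)
    simp only [max_eq_left hx.le]
    ring_nf
  have htail_int : IntegrableOn (fun x ↦ exp (-max (x - s) 0 ^ 2 / 2)) (Ioi s) :=
    .of_integral_ne_zero (by rw [htail]; positivity)
  rw [← intervalIntegral.integral_interval_add_Ioi'
    (Continuous.intervalIntegrable (by fun_prop) _ _) htail_int, hflat, htail]

lemma integral_exp_neg_infDist_Icc_sq (hab : a ≤ b) :
    ∫ x, exp (-infDist x (Icc a b) ^ 2 / 2) = b - a + √(2 * π) := by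
  simp only [infDist_Icc hab]
  rw [integral_sub_right_eq_self (fun x ↦ exp (-max (|x| - (b - a) / 2) 0 ^ 2 / 2)),
    integral_comp_abs (f := fun x ↦ exp (-max (x - (b - a) / 2) 0 ^ 2 / 2)),
    integral_Ioi_exp_neg_max_sub_sq (by linarith)]
  ring

lemma integral_smoothedUniform (hab : a ≤ b) : ∫ x, smoothedUniform a b x = 1 := by
  have : 0 < b - a + √(2 * π) := by have := sub_nonneg.2 hab; positivity
  simp only [smoothedUniform]
  rw [integral_div, integral_exp_neg_infDist_Icc_sq hab, div_self this.ne']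

end Interval

section Mixture

open Set Metric

variable {a b : ℝ}

lemma gaussAt_eq_gaussianPDFReal (μ : ℝ) :
    gaussAt μ = ProbabilityTheory.gaussianPDFReal μ 1 := by
  ext x
  simp [gaussAt, ProbabilityTheory.gaussianPDFReal, div_eq_inv_mul]

lemma smUnif_eq_smoothedUniform (m : ℝ) : smUnif m = smoothedUniform (-m) (2 * m) := by
  ext x
  rw [smUnif, smoothedUniform, show 2 * m - -m = 3 * m by ring]

lemma gaussAt_nonneg (μ x : ℝ) : 0 ≤ gaussAt μ x := by
  unfold gaussAt
  positivity

lemma gaussAt_le_exp_neg_infDist {μ : ℝ} (hμ : μ ∈ Icc a b) (x : ℝ) :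
    gaussAt μ x ≤ exp (-infDist x (Icc a b) ^ 2 / 2) / √(2 * π) := by
  have : infDist x (Icc a b) ^ 2 ≤ (x - μ) ^ 2 := by
    rw [← sq_abs (x - μ), ← Real.dist_eq]
    exact pow_le_pow_left₀ infDist_nonneg (infDist_le_dist_of_mem hμ) 2
  unfold gaussAt
  gcongr

lemma mixture_nonneg (hab : a ≤ b) {w₁ w₂ : ℝ} (hw₁ : 0 ≤ w₁) (hw₂ : 0 ≤ w₂) (μ x : ℝ) :
    0 ≤ w₁ * gaussAt μ x + w₂ * smoothedUniform a b x :=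
  add_nonneg (mul_nonneg hw₁ (gaussAt_nonneg μ x)) (mul_nonneg hw₂ (smoothedUniform_nonneg hab x))

theorem half_mixture_log_sobolev_general {μ w₁ w₂ : ℝ} (hμ : μ ∈ Icc a b) (hw₁ : 0 ≤ w₁)
    (hw₂ : 0 < w₂) (hw : w₁ + w₂ = 1) :
    SatisfiesLogSobolev (fun x ↦ w₁ * gaussAt μ x + w₂ * smoothedUniform a b x)
      (exp 1 * (1 + w₁ / w₂ * ((b - a + √(2 * π)) / √(2 * π))) * (4 + ((b - a) / 2) ^ 2) / 2) := by
  have hab : a ≤ b := hμ.1.trans hμ.2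
  have hN : 0 < b - a + √(2 * π) := by have := sub_nonneg.2 hab; positivity
  have hgauss_one : ∫ x, gaussAt μ x = 1 := by
    rw [gaussAt_eq_gaussianPDFReal]
    exact ProbabilityTheory.integral_gaussianPDFReal_eq_one μ one_ne_zero
  have hunif_one := integral_smoothedUniform hab
  have hgauss : Integrable (gaussAt μ) := .of_integral_ne_zero (hgauss_one ▸ one_ne_zero)
  have hunif : Integrable (smoothedUniform a b) := .of_integral_ne_zero (hunif_one ▸ one_ne_zero)
  have hmix : Integrable fun x ↦ w₁ * gaussAt μ x + w₂ * smoothedUniform a b x :=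
    (hgauss.const_mul w₁).add (hunif.const_mul w₂)
  have hmix_one : ∫ x, (w₁ * gaussAt μ x + w₂ * smoothedUniform a b x) = 1 := by
    rw [integral_add (hgauss.const_mul w₁) (hunif.const_mul w₂), integral_const_mul,
      integral_const_mul, hgauss_one, hunif_one, mul_one, mul_one, hw]
  have lower (x : ℝ) : w₂ / (b - a + √(2 * π)) * exp (-infDist x (Icc a b) ^ 2 / 2)
      ≤ w₁ * gaussAt μ x + w₂ * smoothedUniform a b x := by
    rw [smoothedUniform, div_mul_eq_mul_div, mul_div_assoc]
    exact le_add_of_nonneg_left (mul_nonneg hw₁ (gaussAt_nonneg μ x))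
  have upper (x : ℝ) : w₁ * gaussAt μ x + w₂ * smoothedUniform a b x
      ≤ (w₁ / √(2 * π) + w₂ / (b - a + √(2 * π))) * exp (-infDist x (Icc a b) ^ 2 / 2) := by
    have := mul_le_mul_of_nonneg_left (gaussAt_le_exp_neg_infDist hμ x) hw₁
    exact (add_le_add_left this _).trans_eq (by rw [smoothedUniform]; ring)
  convert satisfiesLogSobolev_of_infDist_Icc hab hmix hmix_one (div_pos hw₂ hN) lower upper
    using 1
  field_simp
  ring

end Mixture

lemma mixture_constant_le {m : ℝ} (hm : 4 ≤ m) :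
    exp 1 * (1 + 1 / 2 / (1 / 2) * ((2 * m - -m + √(2 * π)) / √(2 * π)))
      * (4 + ((2 * m - -m) / 2) ^ 2) / 2 ≤ 324 * m ^ 3 := by
  have he : exp 1 ≤ 3 := exp_one_lt_three.le
  have hsqrt : 2 ≤ √(2 * π) := le_sqrt_of_sq_le (by linarith [pi_gt_three])
  have hratio : 1 + 1 / 2 / (1 / 2) * ((2 * m - -m + √(2 * π)) / √(2 * π)) ≤ 2 + 3 * m / 2 := by
    calc 1 + 1 / 2 / (1 / 2) * ((2 * m - -m + √(2 * π)) / √(2 * π))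
        = 2 + 3 * m / √(2 * π) := by
          field_simp
          ring
      _ ≤ 2 + 3 * m / 2 := by gcongr
  have hratio_nonneg : 0 ≤ (2 * m - -m + √(2 * π)) / √(2 * π) :=
    div_nonneg (by linarith) (sqrt_nonneg _)
  calc _ ≤ 3 * (2 + 3 * m / 2) * (4 + ((2 * m - -m) / 2) ^ 2) / 2 := by gcongr
    _ ≤ 324 * m ^ 3 := by nlinarith [pow_le_pow_left₀ (by norm_num) hm 2]

/-- For m ≥ 4, the target π = (1/2)N(m,1) + (1/2)u_m satisfies a
log-Sobolev inequality with constant 324m³. -/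
theorem half_mixture_log_sobolev
    (m : ℝ) (hm : 4 ≤ m) :
    ∀ f : ℝ → ℝ, ContDiff ℝ (⊤ : ℕ∞) f → HasCompactSupport f →
      (∫ x, (f x) ^ 2
          * Real.log ((f x) ^ 2
              / ∫ y, (f y) ^ 2 * ((1 / 2) * gaussAt m y + (1 / 2) * smUnif m y))
          * ((1 / 2) * gaussAt m x + (1 / 2) * smUnif m x))
        ≤ 2 * (324 * m ^ 3)
            * ∫ x, (deriv f x) ^ 2 * ((1 / 2) * gaussAt m x + (1 / 2) * smUnif m x) := by
  have hmem : m ∈ Set.Icc (-m) (2 * m) := ⟨by linarith, by linarith⟩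
  rw [smUnif_eq_smoothedUniform]
  exact (half_mixture_log_sobolev_general hmem one_half_pos.le one_half_pos (add_halves 1)).mono
    (mixture_nonneg (hmem.1.trans hmem.2) one_half_pos.le one_half_pos.le m)
    (mixture_constant_le hm)
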